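/- Let X be an ∞-pseudo-metric space. If X has an APD profile (i.e. X has Asymptotic Property D), then X has Asymptotic Property C. -/

import Mathlib

open Set
open scoped ENNReal

/-- `y` is joined to `x` by a scale-`r`-chain in `A`: a finite sequence of points of `A`
starting at `x` and ending at `y`, consecutive points of which have intersecting open
`r`-balls. -/
def ScaleChain {X : Type*} [PseudoEMetricSpace X] (r : ℝ) (A : Set X) (x y : X) : Prop :=
  ∃ n : ℕ, ∃ c : ℕ → X, (∀ i ≤ n, c i ∈ A) ∧ c 0 = x ∧ c n = y ∧
    ∀ i < n,
      (EMetric.ball (c i) (ENNReal.ofReal r) ∩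
        EMetric.ball (c (i + 1)) (ENNReal.ofReal r)).Nonempty

/-- The scale-`r`-component of `x` in `A`: all points of `A` joined to `x` by a
scale-`r`-chain in `A`. -/
def ScaleComponent {X : Type*} [PseudoEMetricSpace X] (r : ℝ) (A : Set X) (x : X) : Set X :=
  {y | ScaleChain r A x y}

/-- `A` has scale-`r`-dimension `0`: there is a finite bound on the diameters of all
scale-`r`-components of `A`. -/
def ScaleDimZero {X : Type*} [PseudoEMetricSpace X] (r : ℝ) (A : Set X) : Prop :=
  ∃ M : ℝ≥0∞, M ≠ ⊤ ∧ ∀ x ∈ A, EMetric.diam (ScaleComponent r A x) ≤ M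

/-- `A` is the union of at most `n` subsets of scale-`s`-dimension `0`. -/
def UnionAtMost {X : Type*} [PseudoEMetricSpace X] (n : ℕ) (s : ℝ) (A : Set X) : Prop :=
  ∃ G : Fin n → Set X, A = ⋃ j, G j ∧ ∀ j, ScaleDimZero s (G j)

/-- `(α 0, …, α k)` is an APD profile of `X`: each `α i` is a non-decreasing
nonnegative function of positive reals, `α 0` is constant, and for every non-decreasing array
`(r 0, …, r k)` of positive reals there is a decomposition `X = F 0 ∪ … ∪ F k` where each
`F i` is the union of at most `⌊α i (r (i-1))⌋` subsets of scale-`r i`-dimension `0`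
(`α 0` being applied to its constant value for `i = 0`). -/
def IsAPDProfile (X : Type*) [PseudoEMetricSpace X] (k : ℕ) (α : ℕ → ℝ → ℝ) : Prop :=
  (∀ x y : ℝ, α 0 x = α 0 y) ∧
  (∀ i ≤ k, MonotoneOn (α i) (Set.Ioi (0 : ℝ))) ∧
  (∀ i ≤ k, ∀ x : ℝ, 0 < x → 0 ≤ α i x) ∧
  (∀ r : ℕ → ℝ, (∀ i ≤ k, 0 < r i) → (∀ i < k, r i ≤ r (i + 1)) →
    ∃ F : ℕ → Set X, (⋃ i ∈ Finset.range (k + 1), F i) = univ ∧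
      ∀ i ≤ k, UnionAtMost (Nat.floor (α i (if i = 0 then 0 else r (i - 1)))) (r i) (F i))

/-- `X` has Asymptotic Property C: for every sequence `(r i)_{i ≥ 1}` of positive reals there
exist finitely many subsets `X 1, …, X m` covering `X` such that the `i`-th one is of
scale-`r i`-dimension `0`. -/
def AsymptoticPropertyC (X : Type*) [PseudoEMetricSpace X] : Prop :=
  ∀ r : ℕ → ℝ, (∀ i, 0 < r i) →
    ∃ m : ℕ, ∃ F : Fin m → Set X, (⋃ i, F i) = Set.univ ∧
      ∀ i : Fin m, ScaleDimZero (r (i.val + 1)) (F i)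

theorem ScaleChain.mono {X : Type*} [PseudoEMetricSpace X] {r s : ℝ} (hrs : r ≤ s) {A : Set X}
    {x y : X} (h : ScaleChain r A x y) : ScaleChain s A x y := by
  obtain ⟨n, c, hA, h0, hn, hc⟩ := h
  exact ⟨n, c, hA, h0, hn, fun i hi => (hc i hi).mono <| inter_subset_inter
    (Metric.eball_subset_eball (ENNReal.ofReal_le_ofReal hrs))
    (Metric.eball_subset_eball (ENNReal.ofReal_le_ofReal hrs))⟩

theorem ScaleDimZero.anti {X : Type*} [PseudoEMetricSpace X] {r s : ℝ} (hrs : r ≤ s) {A : Set X}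
    (h : ScaleDimZero s A) : ScaleDimZero r A := by
  obtain ⟨M, hM, hA⟩ := h
  exact ⟨M, hM, fun x hx => (Metric.ediam_mono fun _ hy => hy.mono hrs).trans (hA x hx)⟩

/-- Consecutive blocks of sets of scale-dimension `0` can be concatenated into one family: the
`i`-th block occupies the positions `N i, …, N (i + 1) - 1`. -/
theorem exists_concat_scaleDimZero {X : Type*} [PseudoEMetricSpace X] {r s : ℕ → ℝ} {N n : ℕ → ℕ}
    (hN : ∀ i, N (i + 1) = N i + n i) (hs : ∀ i, ∀ j < N (i + 1), r j ≤ s i)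
    {F : ℕ → Set X} (l : ℕ) (hF : ∀ i < l, UnionAtMost (n i) (s i) (F i)) :
    ∃ H : ℕ → Set X, (∀ j < N l, ScaleDimZero (r j) (H j)) ∧
      ∀ i < l, F i ⊆ ⋃ j < N l, H j := by
  induction l with
  | zero =>
    refine ⟨fun _ => ∅, fun j _ => ⟨0, by simp, by simp⟩, by simp⟩
  | succ l ih =>
    obtain ⟨H, hH, hcov⟩ := ih fun i hi => hF i (hi.trans l.lt_succ_self)
    obtain ⟨G, hFG, hG⟩ := hF l l.lt_succ_self
    refine ⟨fun j => if j < N l then H j else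
      if h : j - N l < n l then G ⟨j - N l, h⟩ else ∅, fun j hj => ?_, fun i hi x hx => ?_⟩
    · have hN' := hN l
      by_cases hjl : j < N l
      · simpa [hjl] using hH j hjl
      · have h : j - N l < n l := by omega
        simpa [hjl, h] using (hG ⟨j - N l, h⟩).anti (hs l j hj)
    · simp only [mem_iUnion, exists_prop]
      rcases Nat.lt_succ_iff_lt_or_eq.1 hi with hi | rfl
      · have hx' := hcov i hi hx
        simp only [mem_iUnion, exists_prop] at hx'
        obtain ⟨j, hj, hxj⟩ := hx'
        exact ⟨j, by have := hN l; omega, by simpa [hj] using hxj⟩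
      · rw [hFG, mem_iUnion] at hx
        obtain ⟨t, ht⟩ := hx
        exact ⟨N i + t, by have := hN i; omega, by simpa using ht⟩

/-- Let `X` be an `∞`-pseudo-metric space. If `X` has an APD profile (i.e. `X` has Asymptotic
Property D), then `X` has Asymptotic Property C. -/
theorem asymptoticPropertyC_of_apdProfile {X : Type*} [PseudoEMetricSpace X]
    (h : ∃ k : ℕ, ∃ α : ℕ → ℝ → ℝ, IsAPDProfile X k α) :
    AsymptoticPropertyC X := by
  obtain ⟨k, α, -, -, -, hα⟩ := h
  intro r hr
  let R : ℕ → ℝ := fun n => ∑ i ∈ Finset.range (n + 1), r i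
  have hRmono : Monotone R := fun a b hab =>
    Finset.sum_le_sum_of_subset_of_nonneg (Finset.range_mono (by omega))
      fun i _ _ => (hr i).le
  have hRpos (n) : 0 < R n := Finset.sum_pos (fun i _ => hr i) (by simp)
  have hrR (n) : r n ≤ R n :=
    Finset.single_le_sum (f := r) (fun i _ => (hr i).le) (Finset.self_mem_range_succ n)
  -- `N i` is the number of scales used up by the first `i` pieces of the decomposition.
  obtain ⟨N, hN⟩ : ∃ N : ℕ → ℕ, ∀ i,
      N (i + 1) = N i + Nat.floor (α i (if i = 0 then 0 else R (N i))) :=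
    ⟨fun i => Nat.rec 0 (fun i m => m + Nat.floor (α i (if i = 0 then 0 else R m))) i,
      fun _ => rfl⟩
  obtain ⟨F, hcov, hF⟩ := hα (fun i => R (N (i + 1))) (fun _ _ => hRpos _)
    fun i _ => hRmono (by rw [hN (i + 1)]; omega)
  obtain ⟨H, hH, hFH⟩ := exists_concat_scaleDimZero (r := fun j => r (j + 1))
    (s := fun i => R (N (i + 1))) hN
    (fun i j hj => (hrR (j + 1)).trans (hRmono hj)) (F := F) (k + 1) fun i hi => by
      have := hF i (Nat.le_of_lt_succ hi)
      rcases i with _ | i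
      · simpa using this
      · simpa using this
  refine ⟨N (k + 1), fun i => H i, eq_univ_of_forall fun x => ?_, fun i => hH i i.2⟩
  have hx : x ∈ ⋃ i ∈ Finset.range (k + 1), F i := hcov ▸ mem_univ x
  simp only [mem_iUnion, Finset.mem_range, exists_prop] at hx
  obtain ⟨i, hi, hxi⟩ := hx
  have hx' := hFH i hi hxi
  simp only [mem_iUnion, exists_prop] at hx'
  obtain ⟨j, hj, hxj⟩ := hx'
  exact mem_iUnion.2 ⟨⟨j, hj⟩, hxj⟩
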